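/- arXiv:2202.08186 — 3 statements merged into one kernel-verified Lean document; each statement's English description precedes it below -/
import Mathlib

section
/- Let G = (V,E) be a finite simple graph with V nonempty. Then tw(G) = TW_G(V). -/
variable {V : Type} [Fintype V] [DecidableEq V]

/-- The neighborhood `N(B)` of a set of vertices `B`. -/
def nbhdSet (G : SimpleGraph V) (B : Finset V) : Set V :=
  {v | v ∉ B ∧ ∃ u ∈ B, G.Adj u v}

/-- `Q_G(S,v)` (relative to a vertex subset `W`): the set of vertices `w ∈ W ∖ (S ∪ {v})`
such that `v` and `w` are connected by a path in `G[S ∪ {v,w}]`. -/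
def QOn (G : SimpleGraph V) (W S : Finset V) (v : V) : Set V :=
  {w | w ∈ W ∧ w ∉ S ∧ w ≠ v ∧
    (G.induce ((S : Set V) ∪ {v, w})).Reachable ⟨v, by simp⟩ ⟨w, by simp⟩}

/-- `π` is a permutation of `W`, i.e. a bijection from `W` onto `{0, …, |W| - 1}`. -/
def IsPermOn (W : Finset V) (π : V → ℕ) : Prop :=
  Set.BijOn π ↑W ↑(Finset.range W.card)

/-- `TW_{G[W]}(S) = min_{π ∈ Π(W)} max_{v ∈ S} |Q_{G[W]}(π_{<v}, v)|`. -/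
noncomputable def TWOn (G : SimpleGraph V) (W S : Finset V) : ℕ :=
  sInf { m | ∃ π : V → ℕ, IsPermOn W π ∧
    m = S.sup fun v => (QOn G W (W.filter fun w => π w < π v) v).ncard }

/-- `TW_G(S)`. -/
noncomputable def TW (G : SimpleGraph V) (S : Finset V) : ℕ :=
  TWOn G Finset.univ S

/-- `TWR_G(L,S)`: as `TW_G(S)` but minimizing only over permutations having `L` as a prefix. -/
noncomputable def TWR (G : SimpleGraph V) (L S : Finset V) : ℕ :=
  sInf { m | ∃ π : V → ℕ, IsPermOn Finset.univ π ∧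
    (∀ w, w ∈ L ↔ π w < L.card) ∧
    m = S.sup fun v =>
      (QOn G Finset.univ (L ∪ Finset.univ.filter fun w => π w < π v) v).ncard }

/-- A tree decomposition of the induced subgraph `G[W]`. -/
structure TreeDecomp (G : SimpleGraph V) (W : Finset V) where
  ι : Type
  [instFintype : Fintype ι]
  tree : SimpleGraph ι
  isTree : tree.IsTree
  bags : ι → Finset V
  bags_subset : ∀ i, bags i ⊆ W
  covers : ∀ v ∈ W, ∃ i, v ∈ bags i
  covers_edges : ∀ u v : V, u ∈ W → v ∈ W → G.Adj u v → ∃ i, u ∈ bags i ∧ v ∈ bags i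
  subtree : ∀ (v : V) (i j : ι) (hi : v ∈ bags i) (hj : v ∈ bags j),
    (tree.induce {k | v ∈ bags k}).Reachable ⟨i, hi⟩ ⟨j, hj⟩

/-- The width of a tree decomposition: (maximum bag size) − 1. -/
noncomputable def TreeDecomp.width {G : SimpleGraph V} {W : Finset V}
    (D : TreeDecomp G W) : ℤ :=
  letI := D.instFintype
  ((Finset.univ.sup fun i => (D.bags i).card : ℕ) : ℤ) - 1

/-- The treewidth of `G`. -/
noncomputable def tw (G : SimpleGraph V) : ℤ :=
  sInf { w : ℤ | ∃ D : TreeDecomp G Finset.univ, D.width = w }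

/-- `tw(G[W], χ)`: the minimum width of a tree decomposition of `G[W]` having `χ` as a bag. -/
noncomputable def twBagOn (G : SimpleGraph V) (W χ : Finset V) : ℤ :=
  sInf { w : ℤ | ∃ D : TreeDecomp G W, (∃ i, D.bags i = χ) ∧ D.width = w }

/-- `tw(G, χ)`. -/
noncomputable def twBag (G : SimpleGraph V) (χ : Finset V) : ℤ :=
  twBagOn G Finset.univ χ

/-- `P_π(v,w)`: there is a path from `v` to `w` in `G` all of whose internal vertices `u`
satisfy `π u < π v` and `π u < π w`. -/
def Ppred (G : SimpleGraph V) (π : V → ℕ) (v w : V) : Prop :=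
  ∃ p : G.Walk v w, ∀ u ∈ p.support, u ≠ v → u ≠ w → π u < π v ∧ π u < π w

/-- `R_π(v)`. -/
noncomputable def Rval (G : SimpleGraph V) (π : V → ℕ) (v : V) : ℕ :=
  {w | π v < π w ∧ Ppred G π v w}.ncard

/-- `C` is the vertex set of a connected component of `G[A]`. -/
def IsCompOf (G : SimpleGraph V) (A C : Finset V) : Prop :=
  C.Nonempty ∧ C ⊆ A ∧ (G.induce (C : Set V)).Connected ∧
    ∀ u ∈ C, ∀ v ∈ A, G.Adj u v → v ∈ C

/-- `Ω` is a potential maximal clique of `G`. -/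
def PotMaxClique (G : SimpleGraph V) (Ω : Finset V) : Prop :=
  (∀ C : Finset V, IsCompOf G (Finset.univ \ Ω) C → nbhdSet G C ≠ ↑Ω) ∧
  ∀ u ∈ Ω, ∀ v ∈ Ω, u ≠ v →
    G.Adj u v ∨ ∃ C : Finset V, IsCompOf G (Finset.univ \ Ω) C ∧
      u ∈ nbhdSet G C ∧ v ∈ nbhdSet G C

/-!
An elimination order `π` yields a tree decomposition on the node set `V`: the bag of `v` consists of
`v` and the set `Q(π_{<v}, v)`, and the parent of `v` is the `π`-least element of that set. Any two
elements of `Q(π_{<v}, v)` are joined through `v` and earlier vertices, so the whole set, apart from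
the parent `u` itself, is contained in `Q(π_{<u}, u)`; hence the nodes whose bag contains `x` are
connected to the node `x` along parents.

Conversely, root a tree decomposition and eliminate the vertices in order of decreasing depth of
their topmost bags. Let `t` be the topmost bag of `v` and consider a path from `v` through earlier
vertices to a later vertex `w` that is not in the bag `t`. Each vertex of this path is missing from
the bag `t` or has no bag above it, so its bags cannot pass from the descendants of `t` to other
nodes; following the path, all bags of `w` lie strictly below `t`. This contradicts the order, by
which the topmost bag of `w` is at most as deep as `t`.
-/

section InducedSubgraphs

variable {α : Type*} {H : SimpleGraph α}

theorem reachable_induce_mono {A B : Set α} (hAB : A ⊆ B) {a b : A}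
    (hab : (H.induce A).Reachable a b) :
    (H.induce B).Reachable (Set.inclusion hAB a) (Set.inclusion hAB b) :=
  hab.map (SimpleGraph.induceHomOfLE H hAB).toHom

theorem prop_of_reachable_induce {A : Set α} {P : α → Prop}
    (hstep : ∀ x ∈ A, ∀ y ∈ A, H.Adj x y → P x → P y) {a b : A}
    (hab : (H.induce A).Reachable a b) (ha : P a) : P b := by
  obtain ⟨walk⟩ := hab
  induction walk with
  | nil => exact ha
  | @cons x y _ hadj _ ih => exact ih (hstep x x.2 y y.2 hadj ha)

end InducedSubgraphs

section ParentGraph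

variable {α β : Type*} [Preorder β] {p : α → α} {f : α → β}

/-- The graph joining each vertex to its parent, for a parent function `p` in which a root is its
own parent. -/
def parentGraph (p : α → α) : SimpleGraph α :=
  SimpleGraph.fromRel fun x y => p x = y

theorem parentGraph_adj_parent {x : α} (hx : f x < f (p x)) : (parentGraph p).Adj x (p x) := by
  rw [parentGraph, SimpleGraph.fromRel_adj]
  exact ⟨ne_of_apply_ne f hx.ne, Or.inl rfl⟩

theorem reachable_induce_parentGraph [Finite α] {A : Set α} {x : α} (hx : x ∈ A)
    (hp : ∀ k ∈ A, k ≠ x → p k ∈ A ∧ f k < f (p k)) {k : α} (hk : k ∈ A) :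
    ((parentGraph p).induce A).Reachable ⟨k, hk⟩ ⟨x, hx⟩ := by
  let : Preorder α := Preorder.lift f
  induction k using WellFoundedGT.induction with
  | ind k ih =>
    obtain rfl | hkx := eq_or_ne k x
    · rfl
    · obtain ⟨hpk, hlt⟩ := hp k hk hkx
      have hadj : ((parentGraph p).induce A).Adj ⟨k, hk⟩ ⟨p k, hpk⟩ := parentGraph_adj_parent hlt
      exact hadj.reachable.trans (ih (p k) hlt hpk)

theorem parentGraph_connected [Finite α] {r : α} (hp : ∀ x, x ≠ r → f x < f (p x)) :
    (parentGraph p).Connected := by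
  have hreach (x : α) : (parentGraph p).Reachable x r :=
    (reachable_induce_parentGraph (Set.mem_univ r)
      (fun k _ hk => ⟨Set.mem_univ _, hp k hk⟩) (Set.mem_univ x)).map
      (SimpleGraph.Embedding.induce _).toHom
  have : Nonempty α := ⟨r⟩
  exact ⟨fun x y => (hreach x).trans (hreach y).symm⟩

theorem edgeSet_parentGraph_subset {r : α} (hr : p r = r) :
    (parentGraph p).edgeSet ⊆ (fun x => s(x, p x)) '' {r}ᶜ := by
  intro e he
  induction e with
  | _ x y =>
    rw [SimpleGraph.mem_edgeSet, parentGraph, SimpleGraph.fromRel_adj] at he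
    obtain ⟨hne, rfl | rfl⟩ := he
    · exact ⟨x, fun hx : x = r => hne (by rw [hx, hr]), rfl⟩
    · exact ⟨y, fun hy : y = r => hne (by rw [hy, hr]), Sym2.eq_swap⟩

theorem parentGraph_isTree [Finite α] {r : α} (hr : p r = r)
    (hp : ∀ x, x ≠ r → f x < f (p x)) : (parentGraph p).IsTree := by
  have hconn := parentGraph_connected hp
  have hedges : (parentGraph p).edgeSet.ncard ≤ ({r}ᶜ : Set α).ncard :=
    (Set.ncard_le_ncard (edgeSet_parentGraph_subset hr)).trans Set.ncard_image_le
  have hcompl := Set.ncard_add_ncard_compl {r}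
  have hverts := hconn.card_vert_le_card_edgeSet_add_one
  rw [Set.ncard_singleton] at hcompl
  rw [Nat.card_coe_set_eq] at hverts
  rw [SimpleGraph.isTree_iff_connected_and_card, Nat.card_coe_set_eq]
  exact ⟨hconn, by omega⟩

end ParentGraph

section Descendants

variable {ι : Type*} {T : SimpleGraph ι} {r t x y : ι}

/-- In a tree `T` rooted at `r`, the node `x` is a (not necessarily proper) descendant of `t`,
expressed by saying that every walk from the root to `x` meets `t`. -/
def IsDescendant (T : SimpleGraph ι) (r t x : ι) : Prop :=
  ∀ walk : T.Walk r x, t ∈ walk.support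

theorem isDescendant_self : IsDescendant T r t t := fun walk => walk.end_mem_support

theorem IsDescendant.eq_of_dist_le (hx : IsDescendant T r t x) (hrx : T.Reachable r x)
    (hle : T.dist r x ≤ T.dist r t) : x = t := by
  classical
  obtain ⟨walk, hwalk⟩ := hrx.exists_walk_length_eq_dist
  by_contra hne
  have hlt : (walk.takeUntil t (hx walk)).length < walk.length :=
    SimpleGraph.Walk.length_takeUntil_lt_length (hx walk) (Ne.symm hne)
  have hdist := SimpleGraph.dist_le (walk.takeUntil t (hx walk))
  omega

theorem IsDescendant.eq_of_adj (hx : IsDescendant T r t x) (hadj : T.Adj x y)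
    (hy : ¬ IsDescendant T r t y) : x = t := by
  obtain ⟨walk, hwalk⟩ := not_forall.mp hy
  have ht := hx (walk.concat hadj.symm)
  rw [SimpleGraph.Walk.support_concat, List.mem_append, List.mem_singleton] at ht
  exact (ht.resolve_left hwalk).symm

theorem dist_lt_of_adj_of_not_isDescendant (hT : T.IsAcyclic) (hadj : T.Adj t y)
    (hy : ¬ IsDescendant T r t y) : T.dist r y < T.dist r t := by
  classical
  obtain ⟨walk, hwalk⟩ := not_forall.mp hy
  have hpath : (walk.bypass.concat hadj.symm).IsPath :=
    walk.bypass_isPath.concat (fun h => hwalk (walk.support_bypass_subset_support h)) hadj.symm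
  obtain ⟨geodesic, hgeodesic, hlength⟩ :=
    (walk.concat hadj.symm).reachable.exists_path_of_dist
  have hunique : walk.bypass.concat hadj.symm = geodesic :=
    congrArg Subtype.val ((hT.subsingleton_path r t).elim ⟨_, hpath⟩ ⟨_, hgeodesic⟩)
  calc T.dist r y ≤ walk.bypass.length := SimpleGraph.dist_le _
    _ < (walk.bypass.concat hadj.symm).length := by simp
    _ = T.dist r t := by rw [hunique, hlength]

theorem IsDescendant.of_reachable_induce (hT : T.IsAcyclic) {A : Set ι}
    (hA : t ∈ A → ∀ k ∈ A, T.dist r t ≤ T.dist r k) {i j : A}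
    (hi : IsDescendant T r t i) (hij : (T.induce A).Reachable i j) : IsDescendant T r t j := by
  refine prop_of_reachable_induce (fun x hx y hy hadj hdesc => ?_) hij hi
  by_contra hndesc
  obtain rfl := hdesc.eq_of_adj hadj hndesc
  exact (dist_lt_of_adj_of_not_isDescendant hT hadj hndesc).not_ge (hA hx y hy)

end Descendants

namespace TreeDecomp

omit [Fintype V] [DecidableEq V]

variable {G : SimpleGraph V} {W : Finset V} (D : TreeDecomp G W)

theorem card_bags_le_width_add_one (i : D.ι) : ((D.bags i).card : ℤ) ≤ D.width + 1 := by
  let := D.instFintype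
  rw [width, sub_add_cancel, Nat.cast_le]
  exact Finset.le_sup (f := fun i => (D.bags i).card) (Finset.mem_univ i)

theorem width_le_of_card_bags_le {n : ℕ} (h : ∀ i, (D.bags i).card ≤ n + 1) : D.width ≤ n := by
  rw [width, sub_le_iff_le_add]
  exact_mod_cast Finset.sup_le fun i _ => h i

theorem neg_one_le_width : -1 ≤ D.width := by
  rw [width, neg_le_sub_iff_le_add]
  exact_mod_cast Nat.le_add_left _ _

/-- The node closest to the root `r` among those whose bag contains `v`. -/
noncomputable def topNode (r : D.ι) {v : V} (hv : v ∈ W) : D.ι :=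
  Function.argminOn (D.tree.dist r) {i | v ∈ D.bags i} (D.covers v hv)

variable {D} {r t : D.ι}

theorem mem_bags_topNode {v : V} (hv : v ∈ W) : v ∈ D.bags (D.topNode r hv) :=
  Function.argminOn_mem (D.tree.dist r) {i | v ∈ D.bags i} (D.covers v hv)

theorem dist_topNode_le {v : V} (hv : v ∈ W) {i : D.ι} (hi : v ∈ D.bags i) :
    D.tree.dist r (D.topNode r hv) ≤ D.tree.dist r i :=
  Function.argminOn_le (D.tree.dist r) {i | v ∈ D.bags i} hi

/-- All bags containing the vertex `x` belong to descendants of the node `t`, where `r` is the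
root. -/
def LiesBelow (D : TreeDecomp G W) (r t : D.ι) (x : V) : Prop :=
  ∀ i, x ∈ D.bags i → IsDescendant D.tree r t i

theorem liesBelow_of_isDescendant {x : V}
    (htop : x ∈ D.bags t → ∀ k, x ∈ D.bags k → D.tree.dist r t ≤ D.tree.dist r k)
    {i : D.ι} (hi : x ∈ D.bags i) (hdesc : IsDescendant D.tree r t i) : D.LiesBelow r t x :=
  fun j hj => hdesc.of_reachable_induce (i := ⟨i, hi⟩) (j := ⟨j, hj⟩) D.isTree.isAcyclic htop
    (D.subtree x i j hi hj)

theorem LiesBelow.of_reachable_induce {A : Set V} (hAW : A ⊆ W)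
    (htop : ∀ x ∈ A, x ∈ D.bags t → ∀ k, x ∈ D.bags k → D.tree.dist r t ≤ D.tree.dist r k)
    {a b : A} (ha : D.LiesBelow r t a) (hab : (G.induce A).Reachable a b) :
    D.LiesBelow r t b := by
  refine prop_of_reachable_induce (fun x hx y hy hadj hbelow => ?_) hab ha
  obtain ⟨i, hxi, hyi⟩ := D.covers_edges x y (hAW hx) (hAW hy) hadj
  exact liesBelow_of_isDescendant (htop y hy) hyi (hbelow i hxi)

end TreeDecomp

section EliminationOrders

omit [DecidableEq V]

/-- The set `Q_G(π_{<v}, v)`: the neighbors of `v` at the time of its elimination, when vertices are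
eliminated in the order `π`. -/
def laterNbrs (G : SimpleGraph V) (π : V → ℕ) (v : V) : Set V :=
  QOn G Finset.univ (Finset.univ.filter fun w => π w < π v) v

/-- The width `max_v |Q_G(π_{<v}, v)|` of the elimination order `π`, whose minimum over all
permutations is `TW_G(V)`. -/
noncomputable def elimWidth (G : SimpleGraph V) (π : V → ℕ) : ℕ :=
  Finset.univ.sup fun v => (laterNbrs G π v).ncard

variable {G : SimpleGraph V} {π : V → ℕ} {r u v w : V}

theorem self_notMem_laterNbrs : v ∉ laterNbrs G π v := fun hv => hv.2.2.1 rfl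

theorem lt_of_mem_laterNbrs (hπ : π.Injective) (hw : w ∈ laterNbrs G π v) : π v < π w := by
  obtain ⟨-, hnlt, hne, -⟩ := hw
  rw [Finset.mem_filter_univ, not_lt] at hnlt
  exact hnlt.lt_of_ne (hπ.ne hne.symm)

theorem mem_laterNbrs_of_adj (hadj : G.Adj v w) (hlt : π v < π w) : w ∈ laterNbrs G π v := by
  refine ⟨Finset.mem_univ _, ?_, hadj.ne', SimpleGraph.Adj.reachable hadj⟩
  rw [Finset.mem_filter_univ]
  exact hlt.not_gt

theorem mem_laterNbrs_of_mem_laterNbrs (hπ : π.Injective) (hu : u ∈ laterNbrs G π v)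
    (hw : w ∈ laterNbrs G π v) (hlt : π u < π w) : w ∈ laterNbrs G π u := by
  have hvu : π v < π u := lt_of_mem_laterNbrs hπ hu
  have hearlier (x : V) (hx : π x < π v) : π x < π u := hx.trans hvu
  refine ⟨Finset.mem_univ _, by simpa using hlt.le, ne_of_apply_ne π hlt.ne', ?_⟩
  refine (reachable_induce_mono ?_ hu.2.2.2).symm.trans (reachable_induce_mono ?_ hw.2.2.2)
  · rintro x (hx | rfl | rfl) <;> simp_all
  · rintro x (hx | rfl | rfl) <;> simp_all

theorem elimWidth_le_iff {n : ℕ} : elimWidth G π ≤ n ↔ ∀ v, (laterNbrs G π v).ncard ≤ n := by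
  simp [elimWidth]

open Classical in
/-- The parent of `v` in the elimination tree of `π`: the earliest of its later neighbors. A vertex
without later neighbors is attached to the root `r`, which joins the components of `G`. -/
noncomputable def elimParent (G : SimpleGraph V) (π : V → ℕ) (r v : V) : V :=
  if h : (laterNbrs G π v).Nonempty then Function.argminOn π (laterNbrs G π v) h else r

theorem elimParent_mem_laterNbrs (h : (laterNbrs G π v).Nonempty) :
    elimParent G π r v ∈ laterNbrs G π v := by
  rw [elimParent, dif_pos h]
  exact Function.argminOn_mem ..

theorem apply_elimParent_le (hw : w ∈ laterNbrs G π v) : π (elimParent G π r v) ≤ π w := by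
  rw [elimParent, dif_pos ⟨w, hw⟩]
  exact Function.argminOn_le _ _ hw

theorem lt_apply_elimParent (hπ : π.Injective) (hr : ∀ v, π v ≤ π r) (hv : v ≠ r) :
    π v < π (elimParent G π r v) := by
  by_cases h : (laterNbrs G π v).Nonempty
  · exact lt_of_mem_laterNbrs hπ (elimParent_mem_laterNbrs h)
  · rw [elimParent, dif_neg h]
    exact (hr v).lt_of_ne (hπ.ne hv)

theorem elimParent_root (hπ : π.Injective) (hr : ∀ v, π v ≤ π r) : elimParent G π r r = r := by
  refine dif_neg ?_
  rintro ⟨w, hw⟩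
  exact (lt_of_mem_laterNbrs hπ hw).not_ge (hr w)

/-- The bag of `v` in the tree decomposition of an elimination order: `v` and its later
neighbors. -/
noncomputable def elimBag (G : SimpleGraph V) (π : V → ℕ) (v : V) : Finset V :=
  (insert v (laterNbrs G π v)).toFinite.toFinset

theorem mem_elimBag : w ∈ elimBag G π v ↔ w = v ∨ w ∈ laterNbrs G π v := by
  rw [elimBag, Set.Finite.mem_toFinset, Set.mem_insert_iff]

theorem self_mem_elimBag : v ∈ elimBag G π v := mem_elimBag.mpr (Or.inl rfl)

theorem card_elimBag : (elimBag G π v).card = (laterNbrs G π v).ncard + 1 := by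
  rw [elimBag, ← Set.ncard_eq_toFinset_card, Set.ncard_insert_of_notMem self_notMem_laterNbrs]

theorem mem_elimBag_elimParent (hπ : π.Injective) (hw : w ∈ laterNbrs G π v) :
    w ∈ elimBag G π (elimParent G π r v) := by
  rw [mem_elimBag, or_iff_not_imp_left]
  intro hne
  exact mem_laterNbrs_of_mem_laterNbrs hπ (elimParent_mem_laterNbrs ⟨w, hw⟩) hw
    ((apply_elimParent_le hw).lt_of_ne (hπ.ne (Ne.symm hne)))

theorem exists_elimBag_of_adj (hπ : π.Injective) (hadj : G.Adj v w) :
    ∃ k, v ∈ elimBag G π k ∧ w ∈ elimBag G π k := by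
  obtain hlt | hlt := (hπ.ne hadj.ne).lt_or_gt
  · exact ⟨v, self_mem_elimBag, mem_elimBag.mpr (Or.inr (mem_laterNbrs_of_adj hadj hlt))⟩
  · exact ⟨w, mem_elimBag.mpr (Or.inr (mem_laterNbrs_of_adj hadj.symm hlt)), self_mem_elimBag⟩

theorem reachable_induce_elimBag (hπ : π.Injective) (hw : w ∈ elimBag G π v) :
    ((parentGraph (elimParent G π r)).induce {k | w ∈ elimBag G π k}).Reachable
      ⟨v, hw⟩ ⟨w, self_mem_elimBag⟩ := by
  refine reachable_induce_parentGraph (f := π) (A := {k | w ∈ elimBag G π k}) _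
    (fun k hk hne => ?_) hw
  have hw : w ∈ laterNbrs G π k := (mem_elimBag.mp hk).resolve_left (Ne.symm hne)
  exact ⟨mem_elimBag_elimParent hπ hw,
    lt_of_mem_laterNbrs hπ (elimParent_mem_laterNbrs ⟨w, hw⟩)⟩

/-- The tree decomposition of `G` given by the elimination order `π`, with the last vertex `r` as
root. -/
noncomputable def elimTreeDecomp (G : SimpleGraph V) (hπ : π.Injective) (hr : ∀ v, π v ≤ π r) :
    TreeDecomp G Finset.univ where
  ι := V
  tree := parentGraph (elimParent G π r)
  isTree := parentGraph_isTree (elimParent_root hπ hr) fun _ => lt_apply_elimParent hπ hr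
  bags := elimBag G π
  bags_subset _ := Finset.subset_univ _
  covers v _ := ⟨v, self_mem_elimBag⟩
  covers_edges _ _ _ _ hadj := exists_elimBag_of_adj hπ hadj
  subtree _ _ _ hi hj :=
    (reachable_induce_elimBag hπ hi).trans (reachable_induce_elimBag hπ hj).symm

theorem width_elimTreeDecomp_le (hπ : π.Injective) (hr : ∀ v, π v ≤ π r) :
    (elimTreeDecomp G hπ hr).width ≤ elimWidth G π :=
  TreeDecomp.width_le_of_card_bags_le _ fun v : V =>
    card_elimBag.trans_le (Nat.succ_le_succ (elimWidth_le_iff.mp le_rfl v))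

theorem exists_treeDecomp_width_le_elimWidth [Nonempty V] (G : SimpleGraph V) (hπ : π.Injective) :
    ∃ D : TreeDecomp G Finset.univ, D.width ≤ elimWidth G π := by
  obtain ⟨r, hr⟩ := Finite.exists_max π
  exact ⟨elimTreeDecomp G hπ hr, width_elimTreeDecomp_le hπ hr⟩

end EliminationOrders

section OrdersFromDecompositions

omit [DecidableEq V]

variable {G : SimpleGraph V} {π : V → ℕ}

theorem laterNbrs_subset_bags_topNode {D : TreeDecomp G Finset.univ} {r : D.ι}
    (hπ : π.Injective)
    (hdepth : ∀ u v, π u < π v → D.tree.dist r (D.topNode r (Finset.mem_univ v)) ≤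
      D.tree.dist r (D.topNode r (Finset.mem_univ u))) (v : V) :
    laterNbrs G π v ⊆ D.bags (D.topNode r (Finset.mem_univ v)) := by
  intro w hw
  set t := D.topNode r (Finset.mem_univ v)
  by_contra hwt
  have htop : ∀ x ∈ ((Finset.univ.filter fun u => π u < π v : Finset V) : Set V) ∪ {v, w},
      x ∈ D.bags t → ∀ k, x ∈ D.bags k → D.tree.dist r t ≤ D.tree.dist r k := by
    rintro x (hx | rfl | rfl) hxt k hk
    · exact (hdepth x v (Finset.mem_filter_univ x |>.mp hx)).trans (TreeDecomp.dist_topNode_le _ hk)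
    · exact TreeDecomp.dist_topNode_le _ hk
    · exact absurd hxt hwt
  have hv : D.LiesBelow r t v := TreeDecomp.liesBelow_of_isDescendant (htop v (by simp))
    (TreeDecomp.mem_bags_topNode _) isDescendant_self
  have hwbelow : D.LiesBelow r t w := hv.of_reachable_induce (by simp) htop hw.2.2.2
  have hwtop : D.topNode r (Finset.mem_univ w) = t :=
    (hwbelow _ (TreeDecomp.mem_bags_topNode _)).eq_of_dist_le (D.isTree.connected r _)
      (hdepth v w (lt_of_mem_laterNbrs hπ hw))
  exact hwt (hwtop ▸ TreeDecomp.mem_bags_topNode (Finset.mem_univ w))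

theorem elimWidth_le_width [Nonempty V] {D : TreeDecomp G Finset.univ} {r : D.ι}
    (hπ : π.Injective)
    (hdepth : ∀ u v, π u < π v → D.tree.dist r (D.topNode r (Finset.mem_univ v)) ≤
      D.tree.dist r (D.topNode r (Finset.mem_univ u))) :
    (elimWidth G π : ℤ) ≤ D.width := by
  obtain ⟨v, -, hv⟩ := Finset.exists_mem_eq_sup (Finset.univ : Finset V) Finset.univ_nonempty
    fun v => (laterNbrs G π v).ncard
  set t := D.topNode r (Finset.mem_univ v)
  have hssubset : laterNbrs G π v ⊂ D.bags t :=
    (Set.ssubset_iff_of_subset (laterNbrs_subset_bags_topNode hπ hdepth v)).mpr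
      ⟨v, TreeDecomp.mem_bags_topNode _, self_notMem_laterNbrs⟩
  have hcard : elimWidth G π < (D.bags t).card := by
    rw [elimWidth, hv, ← Set.ncard_coe_finset]
    exact Set.ncard_lt_ncard hssubset
  have hbag := D.card_bags_le_width_add_one t
  omega

theorem IsPermOn.injective (hπ : IsPermOn Finset.univ π) : π.Injective := by
  rw [← Set.injOn_univ, ← Finset.coe_univ]
  exact hπ.injOn

theorem exists_isPermOn_univ_sorting {β : Type*} [LinearOrder β] (f : V → β) :
    ∃ π : V → ℕ, IsPermOn Finset.univ π ∧ ∀ u v, π u < π v → f u ≤ f v := by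
  let e := Fintype.equivFin V
  let σ := Tuple.sort (f ∘ e.symm)
  refine ⟨fun v => σ.symm (e v), ⟨fun v _ => by simp, fun u _ v _ huv => ?_, fun n hn => ?_⟩,
    fun u v huv => ?_⟩
  · simpa using Fin.ext huv
  · rw [Finset.coe_range, Set.mem_Iio, Finset.card_univ] at hn
    exact ⟨e.symm (σ ⟨n, hn⟩), by simp, by simp⟩
  · simpa [σ] using Tuple.monotone_sort (f ∘ e.symm) (Fin.le_def.mpr huv.le)

theorem exists_isPermOn_elimWidth_le_width [Nonempty V] (D : TreeDecomp G Finset.univ) :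
    ∃ π, IsPermOn Finset.univ π ∧ (elimWidth G π : ℤ) ≤ D.width := by
  obtain ⟨r⟩ := D.isTree.connected.nonempty
  obtain ⟨π, hπ, hdepth⟩ := exists_isPermOn_univ_sorting fun v =>
    OrderDual.toDual (D.tree.dist r (D.topNode r (Finset.mem_univ v)))
  exact ⟨π, hπ, elimWidth_le_width hπ.injective hdepth⟩

end OrdersFromDecompositions

section Minima

omit [DecidableEq V]

variable {G : SimpleGraph V}

theorem TW_univ_le_elimWidth {π : V → ℕ} (hπ : IsPermOn Finset.univ π) :
    TW G Finset.univ ≤ elimWidth G π :=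
  Nat.sInf_le ⟨π, hπ, rfl⟩

theorem exists_isPermOn_TW_univ_eq_elimWidth (G : SimpleGraph V) :
    ∃ π, IsPermOn Finset.univ π ∧ TW G Finset.univ = elimWidth G π := by
  obtain ⟨π, hπ, -⟩ := exists_isPermOn_univ_sorting fun _ : V => 0
  have hne : {m | ∃ π, IsPermOn Finset.univ π ∧ m = elimWidth G π}.Nonempty := ⟨_, π, hπ, rfl⟩
  exact Nat.sInf_mem hne

theorem tw_le_width (D : TreeDecomp G Finset.univ) : tw G ≤ D.width := by
  refine csInf_le ⟨-1, ?_⟩ ⟨D, rfl⟩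
  rintro _ ⟨D', rfl⟩
  exact D'.neg_one_le_width

end Minima

theorem stmt3 [Nonempty V] (G : SimpleGraph V) :
    tw G = (TW G Finset.univ : ℤ) := by
  obtain ⟨π, hπ, hTW⟩ := exists_isPermOn_TW_univ_eq_elimWidth G
  obtain ⟨D, hD⟩ := exists_treeDecomp_width_le_elimWidth G hπ.injective
  apply le_antisymm
  · rw [hTW]
    exact (tw_le_width D).trans hD
  · refine le_csInf ⟨_, D, rfl⟩ ?_
    rintro _ ⟨D', rfl⟩
    obtain ⟨π', hπ', hwidth⟩ := exists_isPermOn_elimWidth_le_width D'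
    exact (Nat.cast_le.mpr (TW_univ_le_elimWidth hπ')).trans hwidth
end

section
/- Let G = (V,E) be a finite simple graph and let χ ⊊ V be a proper subset of its vertices. Let 𝒞 be the set of vertex sets of the connected components of G[V ∖ χ]. Then tw(G,χ) = max_{C ∈ 𝒞} tw(G[C ∪ χ], χ). -/
variable {V : Type} [Fintype V] [DecidableEq V]

/-!
Restricting the bags of a decomposition of `G` to `C ∪ χ` keeps `χ` as a bag and does not increase
the width, so every component gives a lower bound. Conversely, no edge joins two distinct components
of `G[V ∖ χ]`, and the sets `C ∪ χ` meet pairwise in `χ`; hence optimal decompositions of the graphs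
`G[C ∪ χ]` can be glued one after the other by joining their nodes with bag `χ` by an edge. Each
width is at least `|χ| - 1`, so the one-node decomposition of `G[χ]` that starts the gluing costs
nothing.
-/

section Graph

variable {α β : Type*} {S : SimpleGraph α} {T : SimpleGraph β}

lemma not_isAcyclic_induce_of_isCycle {s : Set α} {v : α} {c : S.Walk v v} (hc : c.IsCycle)
    (hs : ∀ x ∈ c.support, x ∈ s) : ¬(S.induce s).IsAcyclic := fun hacyclic ↦
  hacyclic (c.induce s hs) <| .of_map (f := (SimpleGraph.Embedding.induce s).toHom) <| by
    rwa [SimpleGraph.Walk.map_induce]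

lemma isAcyclic_sum (hS : S.IsAcyclic) (hT : T.IsAcyclic) : (S ⊕g T).IsAcyclic := by
  classical
  rintro (v | v) c hc
  · refine not_isAcyclic_induce_of_isCycle hc ?_
      (SimpleGraph.Embedding.sumInl.isoInduceRange.isAcyclic_iff.1 hS)
    rintro (x | x) hx
    · exact ⟨x, rfl⟩
    · exact (SimpleGraph.not_reachable_sum_inl_inr v x (c.takeUntil _ hx).reachable).elim
  · refine not_isAcyclic_induce_of_isCycle hc ?_
      (SimpleGraph.Embedding.sumInr.isoInduceRange.isAcyclic_iff.1 hT)
    rintro (x | x) hx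
    · exact (SimpleGraph.not_reachable_sum_inl_inr x v (c.takeUntil _ hx).reachable.symm).elim
    · exact ⟨x, rfl⟩

lemma isTree_sum_sup_edge (hS : S.IsTree) (hT : T.IsTree) (a : α) (b : β) :
    ((S ⊕g T) ⊔ SimpleGraph.edge (.inl a) (.inr b)).IsTree where
  connected := hS.connected.sum_sup_edge hT.connected
  isAcyclic := (isAcyclic_sum hS.isAcyclic hT.isAcyclic).sup_edge_of_not_reachable
    (SimpleGraph.not_reachable_sum_inl_inr a b)

lemma preconnected_induce_sum_sup_edge {s : Set (α ⊕ β)} {a : α} {b : β}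
    (hS : (S.induce (Sum.inl ⁻¹' s)).Preconnected) (hT : (T.induce (Sum.inr ⁻¹' s)).Preconnected)
    (hs : ∀ x y, .inl x ∈ s → .inr y ∈ s → .inl a ∈ s ∧ .inr b ∈ s) :
    (((S ⊕g T) ⊔ SimpleGraph.edge (.inl a) (.inr b)).induce s).Preconnected := by
  set J := (S ⊕g T) ⊔ SimpleGraph.edge (.inl a) (.inr b)
  let inl : S →g J := (SimpleGraph.Hom.ofLE le_sup_left).comp SimpleGraph.Embedding.sumInl.toHom
  let inr : T →g J := (SimpleGraph.Hom.ofLE le_sup_left).comp SimpleGraph.Embedding.sumInr.toHom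
  have left (x y : Sum.inl ⁻¹' s) : (J.induce s).Reachable ⟨.inl x, x.2⟩ ⟨.inl y, y.2⟩ :=
    (hS x y).map (SimpleGraph.induceHom inl fun _ hx ↦ hx)
  have right (x y : Sum.inr ⁻¹' s) : (J.induce s).Reachable ⟨.inr x, x.2⟩ ⟨.inr y, y.2⟩ :=
    (hT x y).map (SimpleGraph.induceHom inr fun _ hx ↦ hx)
  have across (x : Sum.inl ⁻¹' s) (y : Sum.inr ⁻¹' s) :
      (J.induce s).Reachable ⟨.inl x, x.2⟩ ⟨.inr y, y.2⟩ := by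
    obtain ⟨ha, hb⟩ := hs x y x.2 y.2
    have bridge : (J.induce s).Adj ⟨.inl a, ha⟩ ⟨.inr b, hb⟩ := by simp [J, SimpleGraph.edge_adj]
    exact (left x ⟨a, ha⟩).trans (bridge.reachable.trans (right ⟨b, hb⟩ y))
  rintro ⟨x | x, hx⟩ ⟨y | y, hy⟩
  · exact left ⟨x, hx⟩ ⟨y, hy⟩
  · exact across ⟨x, hx⟩ ⟨y, hy⟩
  · exact (across ⟨y, hy⟩ ⟨x, hx⟩).symm
  · exact right ⟨x, hx⟩ ⟨y, hy⟩

end Graph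

variable {α : Type} {G : SimpleGraph α} {W W' W₁ W₂ χ A C C' : Finset α} {m : ℤ}

section Component

lemma exists_isCompOf {v : α} (hv : v ∈ A) : ∃ C, v ∈ C ∧ IsCompOf G A C := by
  classical
  let F := A.powerset.filter fun C : Finset α ↦ (G.induce (C : Set α)).Connected
  have hsingle : {v} ∈ F := by simp [F, hv, SimpleGraph.Connected.of_subsingleton]
  obtain ⟨C, hle, hC⟩ := F.exists_le_maximal hsingle
  have hvC : v ∈ C := hle (Finset.mem_singleton_self v)
  obtain ⟨hCA, hconn⟩ : C ⊆ A ∧ (G.induce (C : Set α)).Connected := by simpa [F] using hC.prop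
  refine ⟨C, hvC, ⟨v, hvC⟩, hCA, hconn, fun u hu w hw huw ↦ ?_⟩
  have hconn' : (G.induce ((insert w C : Finset α) : Set α)).Connected := by
    rw [Finset.coe_insert, ← Set.union_singleton]
    exact SimpleGraph.connected_induce_union hconn.preconnected .of_subsingleton hu rfl huw
  exact hC.le_of_ge (by simp [F, Finset.insert_subset_iff, hw, hCA, hconn'])
    (Finset.subset_insert w C) (Finset.mem_insert_self w C)

lemma IsCompOf.of_sdiff [DecidableEq α] (hC : IsCompOf G A C) (hC' : IsCompOf G (A \ C) C') :
    IsCompOf G A C' := by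
  obtain ⟨hne, hsub, hconn, hclosed⟩ := hC'
  refine ⟨hne, hsub.trans Finset.sdiff_subset, hconn, fun u hu v hv huv ↦ ?_⟩
  obtain ⟨huA, huC⟩ := Finset.mem_sdiff.1 (hsub hu)
  have hvC : v ∉ C := fun hvC ↦ huC (hC.2.2.2 v hvC u huA huv.symm)
  exact hclosed u hu v (Finset.mem_sdiff.2 ⟨hv, hvC⟩) huv

end Component

namespace TreeDecomp

attribute [local instance] instFintype

lemma width_le_iff (D : TreeDecomp G W) : D.width ≤ m ↔ ∀ i, ((D.bags i).card : ℤ) ≤ m + 1 := by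
  obtain ⟨i₀⟩ := D.isTree.connected.nonempty
  obtain ⟨i, -, hi⟩ := Finset.univ.exists_mem_eq_sup ⟨i₀, Finset.mem_univ i₀⟩
    fun i ↦ (D.bags i).card
  have hmax (j) : (D.bags j).card ≤ (D.bags i).card :=
    hi ▸ Finset.le_sup (f := fun i ↦ (D.bags i).card) (Finset.mem_univ j)
  rw [width, hi, sub_le_iff_le_add]
  exact ⟨fun h j ↦ (Int.ofNat_le.2 (hmax j)).trans h, fun h ↦ h i⟩

/-- The decomposition of `G[W]` with a single node, whose bag is `W`. -/
def single (G : SimpleGraph α) (W : Finset α) : TreeDecomp G W where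
  ι := Unit
  tree := ⊥
  isTree := .of_subsingleton
  bags _ := W
  bags_subset _ := subset_rfl
  covers _ hv := ⟨(), hv⟩
  covers_edges _ _ hu hv _ := ⟨(), hu, hv⟩
  subtree _ _ _ _ _ := .refl _

section Operations

variable [DecidableEq α]

/-- The decomposition of `G[W']` obtained from one of `G[W]`, where `W' ⊆ W`, by intersecting every
bag with `W'`. -/
def restrict (D : TreeDecomp G W) (hW : W' ⊆ W) : TreeDecomp G W' where
  ι := D.ι
  tree := D.tree
  isTree := D.isTree
  bags i := D.bags i ∩ W'
  bags_subset _ := Finset.inter_subset_right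
  covers v hv := (D.covers v (hW hv)).imp fun _ hi ↦ Finset.mem_inter.2 ⟨hi, hv⟩
  covers_edges u v hu hv huv := (D.covers_edges u v (hW hu) (hW hv) huv).imp fun _ hi ↦
    ⟨Finset.mem_inter.2 ⟨hi.1, hu⟩, Finset.mem_inter.2 ⟨hi.2, hv⟩⟩
  subtree v i j hi hj := by
    obtain ⟨hi, hv⟩ := Finset.mem_inter.1 hi
    have hle : {k | v ∈ D.bags k} ≤ {k | v ∈ D.bags k ∩ W'} :=
      fun _ hk ↦ Finset.mem_inter.2 ⟨hk, hv⟩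
    exact (D.subtree v i j hi (Finset.mem_inter.1 hj).1).map (D.tree.induceHomOfLE hle).toHom

lemma width_restrict_le (D : TreeDecomp G W) (hW : W' ⊆ W) : (D.restrict hW).width ≤ D.width :=
  (width_le_iff _).2 fun i ↦ (Int.ofNat_le.2 (Finset.card_le_card Finset.inter_subset_left)).trans
    (D.width_le_iff.1 le_rfl i)

/-- The decomposition of `G[W₁ ∪ W₂]` whose tree is the disjoint union of the trees of `D₁` and `D₂`
together with an edge between `a` and `b`. -/
def glue (D₁ : TreeDecomp G W₁) (D₂ : TreeDecomp G W₂) (a : D₁.ι) (b : D₂.ι)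
    (hinter : W₁ ∩ W₂ ⊆ D₁.bags a ∩ D₂.bags b)
    (hsep : ∀ u ∈ W₁ \ W₂, ∀ v ∈ W₂ \ W₁, ¬G.Adj u v) : TreeDecomp G (W₁ ∪ W₂) where
  ι := D₁.ι ⊕ D₂.ι
  tree := (D₁.tree ⊕g D₂.tree) ⊔ SimpleGraph.edge (.inl a) (.inr b)
  isTree := isTree_sum_sup_edge D₁.isTree D₂.isTree a b
  bags := Sum.elim D₁.bags D₂.bags
  bags_subset := Sum.rec (fun i ↦ (D₁.bags_subset i).trans Finset.subset_union_left)
    fun i ↦ (D₂.bags_subset i).trans Finset.subset_union_right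
  covers v hv := Sum.exists.2 <| (Finset.mem_union.1 hv).imp (D₁.covers v) (D₂.covers v)
  covers_edges u v hu hv huv := by
    have hsame : u ∈ W₁ ∧ v ∈ W₁ ∨ u ∈ W₂ ∧ v ∈ W₂ := by
      have hvu := huv.symm
      grind
    exact Sum.exists.2 <| hsame.imp (fun h ↦ D₁.covers_edges u v h.1 h.2 huv)
      fun h ↦ D₂.covers_edges u v h.1 h.2 huv
  subtree v i j hi hj := by
    refine preconnected_induce_sum_sup_edge (s := {k | v ∈ Sum.elim D₁.bags D₂.bags k})
      (fun x y ↦ D₁.subtree v x y x.2 y.2) (fun x y ↦ D₂.subtree v x y x.2 y.2)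
      (fun x y hx hy ↦ ?_) ⟨i, hi⟩ ⟨j, hj⟩
    exact Finset.mem_inter.1 <| hinter <|
      Finset.mem_inter.2 ⟨D₁.bags_subset x hx, D₂.bags_subset y hy⟩

lemma width_glue_le {D₁ : TreeDecomp G W₁} {D₂ : TreeDecomp G W₂} {a : D₁.ι} {b : D₂.ι}
    (hinter : W₁ ∩ W₂ ⊆ D₁.bags a ∩ D₂.bags b)
    (hsep : ∀ u ∈ W₁ \ W₂, ∀ v ∈ W₂ \ W₁, ¬G.Adj u v) (h₁ : D₁.width ≤ m) (h₂ : D₂.width ≤ m) :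
    (D₁.glue D₂ a b hinter hsep).width ≤ m :=
  (width_le_iff _).2 <| Sum.rec (D₁.width_le_iff.1 h₁) (D₂.width_le_iff.1 h₂)

end Operations

lemma exists_bags_eq (G : SimpleGraph α) (hχ : χ ⊆ W) :
    ∃ D : TreeDecomp G W, ∃ i, D.bags i = χ := by
  classical
  rw [← Finset.union_eq_left.2 hχ]
  exact ⟨(single G W).glue (single G χ) () () subset_rfl
    (fun _ _ _ hv ↦ absurd hv (by simp [Finset.sdiff_eq_empty_iff_subset.2 hχ])), .inr (), rfl⟩

end TreeDecomp

section TwBagOn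

lemma bddBelow_width (G : SimpleGraph α) (W χ : Finset α) :
    BddBelow {w : ℤ | ∃ D : TreeDecomp G W, (∃ i, D.bags i = χ) ∧ D.width = w} := by
  refine ⟨-1, ?_⟩
  rintro _ ⟨D, -, rfl⟩
  exact neg_le_sub_iff_le_add.2 (by simp)

lemma twBagOn_le_iff (hχ : χ ⊆ W) :
    twBagOn G W χ ≤ m ↔ ∃ D : TreeDecomp G W, (∃ i, D.bags i = χ) ∧ D.width ≤ m := by
  refine ⟨fun h ↦ ?_, fun ⟨D, hD, hw⟩ ↦ (csInf_le (bddBelow_width G W χ) ⟨D, hD, rfl⟩).trans hw⟩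
  obtain ⟨D₀, hD₀⟩ := TreeDecomp.exists_bags_eq G hχ
  obtain ⟨D, hD, hw⟩ := Int.csInf_mem
    (s := {w | ∃ D : TreeDecomp G W, (∃ i, D.bags i = χ) ∧ D.width = w})
    ⟨_, D₀, hD₀, rfl⟩ (bddBelow_width G W χ)
  exact ⟨D, hD, hw.trans_le h⟩

lemma card_sub_one_le_twBagOn (hχ : χ ⊆ W) : (χ.card : ℤ) - 1 ≤ twBagOn G W χ := by
  obtain ⟨D, ⟨i, rfl⟩, hw⟩ := (twBagOn_le_iff (G := G) hχ).1 le_rfl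
  exact sub_le_iff_le_add.2 (D.width_le_iff.1 hw i)

lemma twBagOn_self : twBagOn G χ χ = χ.card - 1 := by
  refine le_antisymm ((twBagOn_le_iff subset_rfl).2 ⟨.single G χ, ⟨(), rfl⟩, ?_⟩)
    (card_sub_one_le_twBagOn subset_rfl)
  exact (TreeDecomp.width_le_iff _).2 fun _ ↦ (sub_add_cancel _ _).ge

lemma twBagOn_mono (hχ : χ ⊆ W') (hW : W' ⊆ W) : twBagOn G W' χ ≤ twBagOn G W χ := by
  classical
  obtain ⟨D, ⟨i, rfl⟩, hw⟩ := (twBagOn_le_iff (G := G) (hχ.trans hW)).1 le_rfl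
  exact (twBagOn_le_iff hχ).2
    ⟨D.restrict hW, ⟨i, Finset.inter_eq_left.2 hχ⟩, (D.width_restrict_le hW).trans hw⟩

variable [DecidableEq α]

lemma twBagOn_union_le (hinter : W₁ ∩ W₂ = χ)
    (hsep : ∀ u ∈ W₁ \ W₂, ∀ v ∈ W₂ \ W₁, ¬G.Adj u v) :
    twBagOn G (W₁ ∪ W₂) χ ≤ max (twBagOn G W₁ χ) (twBagOn G W₂ χ) := by
  have hχ₁ : χ ⊆ W₁ := hinter ▸ Finset.inter_subset_left
  have hχ₂ : χ ⊆ W₂ := hinter ▸ Finset.inter_subset_right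
  obtain ⟨D₁, ⟨a, ha⟩, hw₁⟩ := (twBagOn_le_iff (G := G) hχ₁).1 (le_max_left _ (twBagOn G W₂ χ))
  obtain ⟨D₂, ⟨b, hb⟩, hw₂⟩ := (twBagOn_le_iff (G := G) hχ₂).1 (le_max_right (twBagOn G W₁ χ) _)
  have hab : W₁ ∩ W₂ ⊆ D₁.bags a ∩ D₂.bags b := by rw [ha, hb, hinter, Finset.inter_self]
  exact (twBagOn_le_iff (hχ₁.trans Finset.subset_union_left)).2
    ⟨D₁.glue D₂ a b hab hsep, ⟨.inl a, ha⟩, TreeDecomp.width_glue_le hab hsep hw₁ hw₂⟩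

lemma twBagOn_le_max_of_isCompOf (hχ : χ ⊆ W) (hC : IsCompOf G (W \ χ) C) :
    twBagOn G W χ ≤ max (twBagOn G (C ∪ χ) χ) (twBagOn G (W \ C) χ) := by
  obtain ⟨-, hsub, -, hclosed⟩ := hC
  have hunion : (C ∪ χ) ∪ W \ C = W := by grind
  have hinter : (C ∪ χ) ∩ (W \ C) = χ := by grind
  conv_lhs => rw [← hunion]
  refine twBagOn_union_le hinter fun u hu v hv huv ↦ ?_
  have hvC : v ∈ C := hclosed u (by grind) v (by grind) huv
  grind

lemma twBagOn_le_of_forall_isCompOf (hχ : χ ⊆ W) (hm : (χ.card : ℤ) - 1 ≤ m)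
    (hcomp : ∀ C, IsCompOf G (W \ χ) C → twBagOn G (C ∪ χ) χ ≤ m) : twBagOn G W χ ≤ m := by
  induction W using Finset.strongInduction with
  | H W ih =>
    obtain rfl | ⟨v, hvW, hvχ⟩ := hχ.eq_or_ssubset.imp_right Finset.exists_of_ssubset
    · exact twBagOn_self.trans_le hm
    obtain ⟨C, -, hC⟩ := exists_isCompOf (G := G) (Finset.mem_sdiff.2 ⟨hvW, hvχ⟩)
    have hχC : χ ⊆ W \ C :=
      Finset.subset_sdiff.2 ⟨hχ, Finset.disjoint_of_subset_right hC.2.1 Finset.disjoint_sdiff⟩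
    have hrest : twBagOn G (W \ C) χ ≤ m := by
      refine ih _ (Finset.sdiff_ssubset (hC.2.1.trans Finset.sdiff_subset) hC.1) hχC fun C' hC' ↦ ?_
      rw [sdiff_right_comm] at hC'
      exact hcomp C' (hC.of_sdiff hC')
    exact (twBagOn_le_max_of_isCompOf hχ hC).trans (max_le (hcomp C hC) hrest)

end TwBagOn

theorem stmt7_general [DecidableEq α] (G : SimpleGraph α) {W χ : Finset α} (hχ : χ ⊂ W) :
    IsGreatest {w : ℤ | ∃ C : Finset α, IsCompOf G (W \ χ) C ∧ w = twBagOn G (C ∪ χ) χ}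
      (twBagOn G W χ) := by
  have hfinite : {C | IsCompOf G (W \ χ) C}.Finite :=
    (W \ χ).powerset.finite_toSet.subset fun C hC ↦ Finset.mem_powerset.2 hC.2.1
  have hnonempty : {C | IsCompOf G (W \ χ) C}.Nonempty := by
    obtain ⟨v, hv⟩ := Finset.sdiff_nonempty.2 hχ.not_subset
    exact (exists_isCompOf hv).imp fun _ ↦ And.right
  have hle (C) (hC : IsCompOf G (W \ χ) C) : twBagOn G (C ∪ χ) χ ≤ twBagOn G W χ :=
    twBagOn_mono Finset.subset_union_right
      (Finset.union_subset (hC.2.1.trans Finset.sdiff_subset) hχ.subset)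
  obtain ⟨C, hC, hmax⟩ := Set.exists_max_image _ (fun C ↦ twBagOn G (C ∪ χ) χ) hfinite hnonempty
  constructor
  · exact ⟨C, hC, (twBagOn_le_of_forall_isCompOf hχ.subset
      (card_sub_one_le_twBagOn Finset.subset_union_right) hmax).antisymm (hle C hC)⟩
  · rintro _ ⟨C', hC', rfl⟩
    exact hle C' hC'

theorem stmt7 (G : SimpleGraph V) (χ : Finset V) (hχ : χ ⊂ Finset.univ) :
    twBag G χ = sSup {w : ℤ | ∃ C : Finset V,
      IsCompOf G (Finset.univ \ χ) C ∧ w = twBagOn G (C ∪ χ) χ} :=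
  (stmt7_general G hχ).csSup_eq.symm
end

section
/- Let G = (V,E) be a finite simple graph on n = |V| vertices and let p ≥ 1 and c ≥ 1 be integers. Then the number of potential maximal cliques Ω of G with |Ω| = p such that G[V ∖ Ω] has a connected component with exactly c vertices is at most n · C(n−c, p−1), where C(·,·) denotes the binomial coefficient. -/
variable {V : Type} [Fintype V] [DecidableEq V]

/-!
Let `C` be a component of `G[V ∖ Ω]` with at least `c` vertices. Since `N(C) ≠ Ω`, some `x ∈ Ω` lies
outside `N(C)`, so `C` is still a component of `G[V ∖ (Ω ∖ {x})]`. If `Z` is the component of `x`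
in that graph, then `N(Z) = Ω ∖ {x}` because any two vertices of `Ω` are adjacent or see a common
component. Thus `Ω` is determined by `x` and `Z`, and `Z ∪ N(Z)`, being disjoint from `C`, has at
most `n - c` vertices. The sets `Z` are counted by a branching argument of Fomin and Villanger:
there are at most `m.choose f` connected `Z ∋ x` with `|N(Z)| = f` and `|Z ∪ N(Z)| ≤ m + 1`.
-/

open Finset

theorem subset_of_connected_induce {U : Type*} {G : SimpleGraph U} {D S : Set U}
    (hD : (G.induce D).Connected) (hDS : (D ∩ S).Nonempty)
    (hclosed : ∀ u ∈ S, ∀ v ∈ D, G.Adj u v → v ∈ S) : D ⊆ S := by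
  obtain ⟨d, hdD, hdS⟩ := hDS
  intro e heD
  by_contra heS
  obtain ⟨walk⟩ := hD.preconnected ⟨d, hdD⟩ ⟨e, heD⟩
  obtain ⟨dart, -, hfst, hsnd⟩ :=
    walk.exists_boundary_dart {v | (v : U) ∈ S} hdS heS
  exact hsnd (hclosed _ hfst _ dart.snd.2 dart.adj)

theorem connected_induce_insert {U : Type*} {G : SimpleGraph U} {D : Set U} {u v : U}
    (hD : (G.induce D).Connected) (hu : u ∈ D) (huv : G.Adj u v) :
    (G.induce (insert v D)).Connected := by
  have hpair := SimpleGraph.induce_pair_connected_of_adj huv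
  have hunion : insert v D = D ∪ {u, v} := by grind
  rw [hunion]
  exact SimpleGraph.induce_union_connected hD.preconnected hpair.preconnected ⟨u, hu, by simp⟩

namespace IsCompOf

variable {U : Type} {G : SimpleGraph U} {A C D : Finset U}

theorem exists_mem {x : U} (hx : x ∈ A) : ∃ C, IsCompOf G A C ∧ x ∈ C := by
  classical
  let candidates : Finset (Finset U) :=
    {D ∈ A.powerset | x ∈ D ∧ (G.induce (D : Set U)).Connected}
  have hmem (D : Finset U) :
      D ∈ candidates ↔ D ⊆ A ∧ x ∈ D ∧ (G.induce (D : Set U)).Connected := by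
    simp only [candidates, mem_filter, mem_powerset]
  have hsingleton : (G.induce (({x} : Finset U) : Set U)).Connected := by
    rw [coe_singleton]
    exact .of_subsingleton
  obtain ⟨C, hC⟩ := candidates.exists_maximal
    ⟨{x}, (hmem _).2 ⟨by simpa using hx, mem_singleton_self x, hsingleton⟩⟩
  obtain ⟨hCA, hxC, hconn⟩ := (hmem C).1 hC.prop
  refine ⟨C, ⟨⟨x, hxC⟩, hCA, hconn, fun u hu v hv huv => ?_⟩, hxC⟩
  have hinsert : insert v C ∈ candidates := by
    refine (hmem _).2 ⟨insert_subset hv hCA, mem_insert_of_mem hxC, ?_⟩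
    rw [coe_insert]
    exact connected_induce_insert hconn hu huv
  exact hC.le_of_ge hinsert (subset_insert v C) (mem_insert_self v C)

theorem subset_of_connected (hC : IsCompOf G A C) (hDA : D ⊆ A)
    (hD : (G.induce (D : Set U)).Connected) {d : U} (hdD : d ∈ D) (hdC : d ∈ C) : D ⊆ C :=
  coe_subset.1 <| subset_of_connected_induce hD ⟨d, hdD, hdC⟩
    fun u hu v hv => hC.2.2.2 u hu v (hDA hv)

theorem disjoint_of_mem_of_notMem (hC : IsCompOf G A C) (hD : IsCompOf G A D) {x : U}
    (hxC : x ∈ C) (hxD : x ∉ D) : Disjoint C D :=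
  disjoint_left.2 fun _ hvC hvD =>
    hxD (hD.subset_of_connected hC.2.1 hC.2.2.1 hvC hvD hxC)

theorem notMem_of_mem_nbhdSet (hC : IsCompOf G A C) {v : U} (hv : v ∈ nbhdSet G C) : v ∉ A := by
  obtain ⟨hvC, u, hu, huv⟩ := hv
  exact fun hvA => hvC (hC.2.2.2 u hu v hvA huv)

theorem sdiff_erase [Fintype U] [DecidableEq U] {Ω : Finset U}
    (hC : IsCompOf G (univ \ Ω) C) {x : U} (hx : x ∉ nbhdSet G C) :
    IsCompOf G (univ \ Ω.erase x) C := by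
  obtain ⟨hne, hsub, hconn, hclosed⟩ := hC
  refine ⟨hne, hsub.trans (sdiff_subset_sdiff subset_rfl (erase_subset x Ω)), hconn,
    fun u hu v hv huv => ?_⟩
  by_contra hvC
  have hvx : v ≠ x := by
    rintro rfl
    exact hx ⟨hvC, u, hu, huv⟩
  exact hvC (hclosed u hu v (by grind) huv)

end IsCompOf

open Classical in
/-- The neighborhood `N(Z)` as a finset, so that it can be counted. -/
noncomputable def nbhdFinset (G : SimpleGraph V) (Z : Finset V) : Finset V :=
  {v | v ∈ nbhdSet G Z}

section nbhdFinset

variable {U : Type} [Fintype U] {G : SimpleGraph U} {A Z : Finset U} {v : U}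

theorem mem_nbhdFinset : v ∈ nbhdFinset G Z ↔ v ∉ Z ∧ ∃ u ∈ Z, G.Adj u v := by
  simp only [nbhdFinset, mem_filter_univ]
  rfl

theorem mem_or_mem_nbhdFinset_of_subset (hAZ : A ⊆ Z) (hv : v ∈ nbhdFinset G A) :
    v ∈ Z ∨ v ∈ nbhdFinset G Z := by
  obtain ⟨-, u, hu, huv⟩ := mem_nbhdFinset.1 hv
  exact or_iff_not_imp_left.2 fun hvZ => mem_nbhdFinset.2 ⟨hvZ, u, hAZ hu, huv⟩

end nbhdFinset

namespace PotMaxClique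

variable {G : SimpleGraph V} {Ω C Z : Finset V}

theorem exists_mem_notMem_nbhdSet (hΩ : PotMaxClique G Ω) (hC : IsCompOf G (univ \ Ω) C) :
    ∃ x ∈ Ω, x ∉ nbhdSet G C := by
  by_contra! hsub
  exact hΩ.1 C hC <| Set.Subset.antisymm
    (fun v hv => by simpa using hC.notMem_of_mem_nbhdSet hv) hsub

theorem nbhdFinset_eq_erase (hΩ : PotMaxClique G Ω) {x : V} (hxΩ : x ∈ Ω)
    (hZ : IsCompOf G (univ \ Ω.erase x) Z) (hxZ : x ∈ Z) : nbhdFinset G Z = Ω.erase x := by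
  apply Subset.antisymm
  · intro v hv
    simpa using hZ.notMem_of_mem_nbhdSet (mem_nbhdFinset.1 hv)
  intro v hv
  have hvZ : v ∉ Z := fun h => (mem_sdiff.1 (hZ.2.1 h)).2 hv
  obtain ⟨hvx, hvΩ⟩ := mem_erase.1 hv
  rcases hΩ.2 x hxΩ v hvΩ hvx.symm with hadj | ⟨D, hD, ⟨-, d, hdD, hdx⟩, ⟨-, e, heD, hev⟩⟩
  · exact mem_nbhdFinset.2 ⟨hvZ, x, hxZ, hadj⟩
  · have hDsub : D ⊆ univ \ Ω.erase x :=
      hD.2.1.trans (sdiff_subset_sdiff subset_rfl (erase_subset x Ω))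
    have hdZ : d ∈ Z := hZ.2.2.2 x hxZ d (hDsub hdD) hdx.symm
    have heZ : e ∈ Z := hZ.subset_of_connected hDsub hD.2.2.1 hdD hdZ heD
    exact mem_nbhdFinset.2 ⟨hvZ, e, heZ, hev⟩

theorem exists_connected_nbhdFinset_eq_erase (hΩ : PotMaxClique G Ω)
    (hC : IsCompOf G (univ \ Ω) C) :
    ∃ x ∈ Ω, ∃ Z : Finset V, x ∈ Z ∧ (G.induce (Z : Set V)).Connected ∧ nbhdFinset G Z = Ω.erase x ∧
      Disjoint (Z ∪ nbhdFinset G Z) C := by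
  obtain ⟨x, hxΩ, hxC⟩ := hΩ.exists_mem_notMem_nbhdSet hC
  obtain ⟨Z, hZ, hxZ⟩ := IsCompOf.exists_mem (G := G) (A := univ \ Ω.erase x) (x := x) (by simp)
  have hnbhd := hΩ.nbhdFinset_eq_erase hxΩ hZ hxZ
  refine ⟨x, hxΩ, Z, hxZ, hZ.2.2.1, hnbhd, disjoint_union_left.2 ⟨?_, ?_⟩⟩
  · have hxC' : x ∉ C := fun h => (mem_sdiff.1 (hC.2.1 h)).2 hxΩ
    exact hZ.disjoint_of_mem_of_notMem (hC.sdiff_erase hxC) hxZ hxC'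
  · rw [hnbhd]
    exact (disjoint_sdiff.mono_right hC.2.1).mono_left (erase_subset x Ω)

end PotMaxClique

open Classical in
/-- The connected vertex sets `Z` that contain `A` and avoid `B`, with exactly `f` neighbors outside
`B` and with at most `m` vertices of `Z ∪ N(Z)` outside `A ∪ B`. In the branching, `A` and `B` are
the vertices already put inside and outside `Z`. -/
noncomputable def connectedExtensions (G : SimpleGraph V) (A B : Finset V) (m f : ℕ) :
    Finset (Finset V) :=
  {Z | A ⊆ Z ∧ Disjoint B Z ∧ (G.induce (Z : Set V)).Connected ∧
    #(nbhdFinset G Z \ B) = f ∧ #((Z ∪ nbhdFinset G Z) \ (A ∪ B)) ≤ m}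

section connectedExtensions

variable {G : SimpleGraph V} {A B Z : Finset V} {m f : ℕ} {w : V}

theorem mem_connectedExtensions :
    Z ∈ connectedExtensions G A B m f ↔
      A ⊆ Z ∧ Disjoint B Z ∧ (G.induce (Z : Set V)).Connected ∧
        #(nbhdFinset G Z \ B) = f ∧ #((Z ∪ nbhdFinset G Z) \ (A ∪ B)) ≤ m := by
  simp [connectedExtensions]

theorem eq_of_mem_connectedExtensions_of_nbhdFinset_subset (hA : A.Nonempty)
    (hN : nbhdFinset G A ⊆ B) (hZ : Z ∈ connectedExtensions G A B m f) : Z = A := by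
  obtain ⟨hAZ, hBZ, hconn, -⟩ := mem_connectedExtensions.1 hZ
  obtain ⟨a, ha⟩ := hA
  refine Subset.antisymm (coe_subset.1 ?_) hAZ
  refine subset_of_connected_induce hconn ⟨a, hAZ ha, ha⟩ fun u hu v hv huv => ?_
  by_contra hvA
  exact disjoint_left.1 hBZ (hN (mem_nbhdFinset.2 ⟨hvA, u, hu, huv⟩)) hv

theorem le_of_mem_connectedExtensions (hZ : Z ∈ connectedExtensions G A B m f) : f ≤ m := by
  obtain ⟨hAZ, -, -, rfl, hm⟩ := mem_connectedExtensions.1 hZ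
  refine (card_le_card fun v hv => ?_).trans hm
  obtain ⟨hvN, hvB⟩ := mem_sdiff.1 hv
  have hvA : v ∉ A := fun h => (mem_nbhdFinset.1 hvN).1 (hAZ h)
  simp [hvN, hvB, hvA]

theorem card_connectedExtensions_le_of_nbhdFinset_subset (hA : A.Nonempty)
    (hN : nbhdFinset G A ⊆ B) : #(connectedExtensions G A B m f) ≤ m.choose f := by
  obtain hempty | ⟨Z, hZ⟩ := (connectedExtensions G A B m f).eq_empty_or_nonempty
  · simp [hempty]
  calc #(connectedExtensions G A B m f)
      ≤ #{A} := card_le_card fun Y hY =>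
        mem_singleton.2 (eq_of_mem_connectedExtensions_of_nbhdFinset_subset hA hN hY)
    _ = 1 := card_singleton A
    _ ≤ m.choose f := Nat.choose_pos (le_of_mem_connectedExtensions hZ)

theorem connectedExtensions_zero_eq_empty (hw : w ∈ nbhdFinset G A) (hwB : w ∉ B) :
    connectedExtensions G A B 0 f = ∅ := by
  refine eq_empty_of_forall_notMem fun Z hZ => ?_
  obtain ⟨hAZ, -, -, -, hcard⟩ := mem_connectedExtensions.1 hZ
  have hwZ := mem_or_mem_nbhdFinset_of_subset hAZ hw
  have hwA := (mem_nbhdFinset.1 hw).1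
  have hpos : 0 < #((Z ∪ nbhdFinset G Z) \ (A ∪ B)) :=
    card_pos.2 ⟨w, by simp [hwZ, hwA, hwB]⟩
  exact hcard.not_gt hpos

theorem mem_connectedExtensions_insert_left (hZ : Z ∈ connectedExtensions G A B (m + 1) f)
    (hwA : w ∉ A) (hwZ : w ∈ Z) : Z ∈ connectedExtensions G (insert w A) B m f := by
  obtain ⟨hAZ, hBZ, hconn, hf, hm⟩ := mem_connectedExtensions.1 hZ
  have hwB : w ∉ B := disjoint_right.1 hBZ hwZ
  refine mem_connectedExtensions.2 ⟨insert_subset hwZ hAZ, hBZ, hconn, hf, ?_⟩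
  rw [insert_union, sdiff_insert, card_erase_of_mem (by simp [hwZ, hwA, hwB])]
  exact Nat.sub_le_of_le_add hm

theorem mem_connectedExtensions_insert_right
    (hZ : Z ∈ connectedExtensions G A B (m + 1) (f + 1)) (hwB : w ∉ B)
    (hwZ : w ∈ nbhdFinset G Z) : Z ∈ connectedExtensions G A (insert w B) m f := by
  obtain ⟨hAZ, hBZ, hconn, hf, hm⟩ := mem_connectedExtensions.1 hZ
  have hw : w ∉ Z := (mem_nbhdFinset.1 hwZ).1
  have hwA : w ∉ A := fun h => hw (hAZ h)
  refine mem_connectedExtensions.2 ⟨hAZ, disjoint_insert_left.2 ⟨hw, hBZ⟩, hconn, ?_, ?_⟩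
  · rw [sdiff_insert, card_erase_of_mem (mem_sdiff.2 ⟨hwZ, hwB⟩), hf, Nat.add_sub_cancel]
  · rw [union_insert, sdiff_insert, card_erase_of_mem (by simp [hwZ, hwA, hwB])]
    exact Nat.sub_le_of_le_add hm

theorem connectedExtensions_zero_right_subset (hw : w ∈ nbhdFinset G A) (hwB : w ∉ B) :
    connectedExtensions G A B (m + 1) 0 ⊆ connectedExtensions G (insert w A) B m 0 := by
  intro Z hZ
  obtain ⟨hAZ, -, -, hcard, -⟩ := mem_connectedExtensions.1 hZ
  have hNB : nbhdFinset G Z ⊆ B := sdiff_eq_empty_iff_subset.1 (card_eq_zero.1 hcard)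
  have hwZ := (mem_or_mem_nbhdFinset_of_subset hAZ hw).resolve_right fun h => hwB (hNB h)
  exact mem_connectedExtensions_insert_left hZ (mem_nbhdFinset.1 hw).1 hwZ

theorem connectedExtensions_succ_subset_union (hw : w ∈ nbhdFinset G A) (hwB : w ∉ B) :
    connectedExtensions G A B (m + 1) (f + 1) ⊆
      connectedExtensions G A (insert w B) m f ∪
        connectedExtensions G (insert w A) B m (f + 1) := by
  intro Z hZ
  rcases mem_or_mem_nbhdFinset_of_subset (mem_connectedExtensions.1 hZ).1 hw with hwZ | hwZ
  · exact mem_union_right _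
      (mem_connectedExtensions_insert_left hZ (mem_nbhdFinset.1 hw).1 hwZ)
  · exact mem_union_left _ (mem_connectedExtensions_insert_right hZ hwB hwZ)

theorem card_connectedExtensions_le (hA : A.Nonempty) :
    #(connectedExtensions G A B m f) ≤ m.choose f := by
  induction m generalizing A B f with
  | zero =>
    by_cases hN : nbhdFinset G A ⊆ B
    · exact card_connectedExtensions_le_of_nbhdFinset_subset hA hN
    obtain ⟨w, hw, hwB⟩ := not_subset.1 hN
    simp [connectedExtensions_zero_eq_empty hw hwB]
  | succ m ih =>
    by_cases hN : nbhdFinset G A ⊆ B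
    · exact card_connectedExtensions_le_of_nbhdFinset_subset hA hN
    obtain ⟨w, hw, hwB⟩ := not_subset.1 hN
    have hwA : (insert w A).Nonempty := insert_nonempty w A
    cases f with
    | zero =>
      simpa using (card_le_card (connectedExtensions_zero_right_subset hw hwB)).trans (ih hwA)
    | succ f =>
      calc #(connectedExtensions G A B (m + 1) (f + 1))
          ≤ #(connectedExtensions G A (insert w B) m f) +
              #(connectedExtensions G (insert w A) B m (f + 1)) :=
            (card_le_card (connectedExtensions_succ_subset_union hw hwB)).trans
              (card_union_le _ _)
        _ ≤ m.choose f + m.choose (f + 1) := Nat.add_le_add (ih hA) (ih hwA)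
        _ = (m + 1).choose (f + 1) := (Nat.choose_succ_succ' m f).symm

end connectedExtensions

theorem PotMaxClique.exists_mem_connectedExtensions {G : SimpleGraph V} {Ω C : Finset V} {c : ℕ}
    (hΩ : PotMaxClique G Ω) (hC : IsCompOf G (univ \ Ω) C) (hc : c ≤ #C) :
    ∃ x, ∃ Z ∈ connectedExtensions G {x} ∅ (Fintype.card V - c - 1) (#Ω - 1),
      insert x (nbhdFinset G Z) = Ω := by
  obtain ⟨x, hxΩ, Z, hxZ, hconn, hnbhd, hdisj⟩ := hΩ.exists_connected_nbhdFinset_eq_erase hC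
  refine ⟨x, Z, mem_connectedExtensions.2
    ⟨singleton_subset_iff.2 hxZ, disjoint_empty_left Z, hconn, ?_, ?_⟩, ?_⟩
  · rw [sdiff_empty, hnbhd, card_erase_of_mem hxΩ]
  · have hcard : #(Z ∪ nbhdFinset G Z) + #C ≤ Fintype.card V := by
      rw [← card_union_of_disjoint hdisj]
      exact card_le_univ _
    rw [union_empty, sdiff_singleton_eq_erase, card_erase_of_mem (mem_union_left _ hxZ)]
    omega
  · rw [hnbhd, insert_erase hxΩ]

theorem stmt14_general (G : SimpleGraph V) (p c : ℕ) :
    {Ω : Finset V | PotMaxClique G Ω ∧ #Ω = p ∧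
        ∃ C : Finset V, IsCompOf G (univ \ Ω) C ∧ c ≤ #C}.ncard
      ≤ Fintype.card V * (Fintype.card V - c - 1).choose (p - 1) := by
  let codes (x : V) : Finset (Finset V) :=
    connectedExtensions G {x} ∅ (Fintype.card V - c - 1) (p - 1)
  let decoded : Finset (Finset V) :=
    univ.biUnion fun x => (codes x).image fun Z => insert x (nbhdFinset G Z)
  calc _ ≤ (decoded : Set (Finset V)).ncard := by
        refine Set.ncard_le_ncard ?_ decoded.finite_toSet
        rintro Ω ⟨hΩ, rfl, C, hC, hc⟩
        obtain ⟨x, Z, hZ, hΩZ⟩ := hΩ.exists_mem_connectedExtensions hC hc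
        exact mem_biUnion.2 ⟨x, mem_univ x, mem_image.2 ⟨Z, hZ, hΩZ⟩⟩
    _ = #decoded := Set.ncard_coe_finset decoded
    _ ≤ Fintype.card V * (Fintype.card V - c - 1).choose (p - 1) :=
        card_biUnion_le_card_mul _ _ _ fun x _ =>
          card_image_le.trans (card_connectedExtensions_le (singleton_nonempty x))

theorem stmt14 (G : SimpleGraph V) (p c : ℕ) (hp : 1 ≤ p) (hc : 1 ≤ c) :
    {Ω : Finset V | PotMaxClique G Ω ∧ Ω.card = p ∧
        ∃ C : Finset V, IsCompOf G (Finset.univ \ Ω) C ∧ C.card = c}.ncard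
      ≤ Fintype.card V * (Fintype.card V - c).choose (p - 1) := by
  refine (Set.ncard_le_ncard ?_).trans ((stmt14_general G p c).trans ?_)
  · exact fun Ω ⟨hΩ, hcard, C, hC, hCcard⟩ => ⟨hΩ, hcard, C, hC, hCcard.ge⟩
  · exact Nat.mul_le_mul_left _ (Nat.choose_le_choose _ (Nat.sub_le _ 1))
end
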